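/- Let Π = (MIN, MAX) be an objective decomposition and S a scalarization for Π. For y' ∈ ℝ^p_> and s ∈ S let R(y', s) := {max(max_{i ∈ MIN} y_i/y'_i, max_{i ∈ MAX} y'_i/y_i) : y ∈ L(y', s)}, and define, in the extended reals, α := sup_{y' ∈ ℝ^p_>} inf_{s ∈ S} sup R(y', s). If α < ∞, then for every ε > 0, in every instance of every p-objective optimization problem of type Π, every optimal solution set for S is an (α + ε)-approximation set. If, additionally, for every y' ∈ ℝ^p_> the infimum inf_{s ∈ S} sup R(y', s) is attained at some s ∈ S and is finite, then in every instance of every p-objective optimization problem of type Π, every optimal solution set for S is an α-approximation set. -/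

import Mathlib

open scoped Classical

namespace MOApprox

/-- Membership in the positive orthant `ℝ^p_>`. -/
def Pos (p : ℕ) (y : Fin p → ℝ) : Prop := ∀ i, 0 < y i

/-- Strict component-wise order `<_Π`, where `Π = (MIN, MINᶜ)`. -/
def ltPi (p : ℕ) (MIN : Set (Fin p)) (y y' : Fin p → ℝ) : Prop :=
  (∀ i ∈ MIN, y i < y' i) ∧ (∀ i ∉ MIN, y' i < y i)

/-- Weak component-wise order `≦_Π`. -/
def leqPi (p : ℕ) (MIN : Set (Fin p)) (y y' : Fin p → ℝ) : Prop :=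
  (∀ i ∈ MIN, y i ≤ y' i) ∧ (∀ i ∉ MIN, y' i ≤ y i)

/-- Component-wise order `≤_Π`. -/
def lePi (p : ℕ) (MIN : Set (Fin p)) (y y' : Fin p → ℝ) : Prop :=
  leqPi p MIN y y' ∧ y ≠ y'

/-- A scalarizing function for the decomposition `(MIN, MINᶜ)`:
continuous on the positive orthant and strictly `Π`-monotone. -/
def Scalarizing (p : ℕ) (MIN : Set (Fin p)) (s : (Fin p → ℝ) → ℝ) : Prop :=
  ContinuousOn s {y | Pos p y} ∧
    ∀ y y', Pos p y → Pos p y' → ltPi p MIN y y' → s y < s y'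

/-- Strong `Π`-monotonicity. -/
def StronglyMonotone (p : ℕ) (MIN : Set (Fin p)) (s : (Fin p → ℝ) → ℝ) : Prop :=
  ∀ y y', Pos p y → Pos p y' → lePi p MIN y y' → s y < s y'

/-- Level set of `s` at `y'` (within the positive orthant). -/
def LevelSet (p : ℕ) (s : (Fin p → ℝ) → ℝ) (y' : Fin p → ℝ) : Set (Fin p → ℝ) :=
  {y | Pos p y ∧ s y = s y'}

/-- `x` is optimal for the scalarizing function `s` in the instance `(X, f)`. -/
def OptimalFor {X : Type*} (p : ℕ) (s : (Fin p → ℝ) → ℝ) (f : X → Fin p → ℝ) (x : X) : Prop :=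
  ∀ x', s (f x) ≤ s (f x')

/-- `P` is an optimal solution set for the scalarization `S`. -/
def OptSolSet {X : Type*} (p : ℕ) (S : Set ((Fin p → ℝ) → ℝ)) (f : X → Fin p → ℝ)
    (P : Set X) : Prop :=
  ∀ s ∈ S, ∃ x ∈ P, OptimalFor p s f x

/-- `x` α-approximates `x'` with respect to the decomposition `(MIN, MINᶜ)`. -/
def Approximates {X : Type*} (p : ℕ) (MIN : Set (Fin p)) (α : ℝ) (f : X → Fin p → ℝ)
    (x x' : X) : Prop :=
  (∀ i ∈ MIN, f x i ≤ α * f x' i) ∧ (∀ i ∉ MIN, (1 / α) * f x' i ≤ f x i)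

/-- `P` is an α-approximation set. -/
def ApproxSet {X : Type*} (p : ℕ) (MIN : Set (Fin p)) (α : ℝ) (f : X → Fin p → ℝ)
    (P : Set X) : Prop :=
  ∀ x' : X, ∃ x ∈ P, Approximates p MIN α f x x'

/-- The flip map `σ^Γ`. -/
noncomputable def flipMap (p : ℕ) (Γ : Set (Fin p)) (y : Fin p → ℝ) : Fin p → ℝ :=
  fun i => if i ∈ Γ then 1 / y i else y i

/-- The `Γ`-transformed decomposition `MIN^Γ = (MIN \ Γ) ∪ (Γ ∩ MAX)`. -/
def transDec (p : ℕ) (MIN Γ : Set (Fin p)) : Set (Fin p) :=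
  (MIN \ Γ) ∪ (Γ ∩ MINᶜ)

/-- The component-wise worst-case ratio
`max(max_{i ∈ MIN} y_i/y'_i, max_{i ∈ MAX} y'_i/y_i)`, where a maximum
over an empty index set is `0` (the convention of `Real.sSup` on `∅`). -/
noncomputable def ratio (p : ℕ) (MIN : Set (Fin p)) (y' y : Fin p → ℝ) : ℝ :=
  max (⨆ i : MIN, y i / y' i) (⨆ i : ↥(MINᶜ), y' i / y i)

/-- `sup R(y', s)`, taken in the extended reals. -/
noncomputable def supRatio (p : ℕ) (MIN : Set (Fin p)) (s : (Fin p → ℝ) → ℝ)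
    (y' : Fin p → ℝ) : EReal :=
  sSup ((fun y => ((ratio p MIN y' y : ℝ) : EReal)) '' LevelSet p s y')

/-- The function value of a `p`-dimensional norm, as a predicate. -/
def IsNorm (p : ℕ) (s : (Fin p → ℝ) → ℝ) : Prop :=
  (∀ y, 0 ≤ s y) ∧ (∀ y, s y = 0 ↔ y = 0) ∧
    (∀ (c : ℝ) (y), s (c • y) = |c| * s y) ∧
    (∀ y z, s (y + z) ≤ s y + s z)

/-- Strict monotonicity on the positive orthant. -/
def StrictMonoOnPos (p : ℕ) (s : (Fin p → ℝ) → ℝ) : Prop :=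
  ∀ y y' : Fin p → ℝ, Pos p y → Pos p y' → (∀ i, y i < y' i) → s y < s y'

end MOApprox

/-!
If `s y ≤ s y'`, make all components of `y` worse by a common factor `t`, starting from `t = 1`.
For large `t` the resulting point is worse than `y'` in every component, so by continuity of `s`
the curve meets the level set of `s` at `y'` in some `z`, which is weakly worse than `y`. A bound
on the ratios over the level set bounds the components of `z` by those of `y'`, and hence those of
`y` as well. If `y` is the image of a solution that is optimal for `s`, then `s y ≤ s y'` holds for
every feasible `y'`.
-/

namespace MOApprox

section Worsen

variable {p : ℕ} {MIN : Set (Fin p)} {y y' z : Fin p → ℝ} {c t : ℝ}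

/-- The point `y` with every component made worse by the factor `t`, with respect to the
decomposition `(MIN, MINᶜ)`. It turns the ratio bounds between two points into `Π`-comparisons,
and `t ↦ worsen MIN t y` is the curve along which level sets are reached. -/
noncomputable def worsen (MIN : Set (Fin p)) (t : ℝ) (y : Fin p → ℝ) : Fin p → ℝ :=
  fun i => if i ∈ MIN then t * y i else y i / t

lemma worsen_apply_of_mem {i : Fin p} (hi : i ∈ MIN) : worsen MIN t y i = t * y i :=
  if_pos hi

lemma worsen_apply_of_notMem {i : Fin p} (hi : i ∉ MIN) : worsen MIN t y i = y i / t :=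
  if_neg hi

lemma worsen_one : worsen MIN 1 y = y := by
  funext i
  simp [worsen]

lemma Pos.worsen (hy : Pos p y) (ht : 0 < t) : Pos p (worsen MIN t y) := fun i => by
  by_cases hi : i ∈ MIN
  · simpa only [worsen_apply_of_mem hi] using mul_pos ht (hy i)
  · simpa only [worsen_apply_of_notMem hi] using div_pos (hy i) ht

lemma continuousOn_worsen : ContinuousOn (fun t => worsen MIN t y) {0}ᶜ := by
  refine continuousOn_pi.2 fun i => ?_
  by_cases hi : i ∈ MIN
  · simpa only [worsen_apply_of_mem hi] using (continuous_mul_const (y i)).continuousOn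
  · simp only [worsen_apply_of_notMem hi]
    exact continuousOn_const.div continuousOn_id fun _ ht => ht

lemma leqPi.trans (h₁ : leqPi p MIN y z) (h₂ : leqPi p MIN z y') : leqPi p MIN y y' :=
  ⟨fun i hi => (h₁.1 i hi).trans (h₂.1 i hi), fun i hi => (h₂.2 i hi).trans (h₁.2 i hi)⟩

lemma leqPi_worsen_self (hy : Pos p y) (ht : 1 ≤ t) : leqPi p MIN y (worsen MIN t y) := by
  refine ⟨fun i hi => ?_, fun i hi => ?_⟩
  · simpa only [worsen_apply_of_mem hi] using le_mul_of_one_le_left (hy i).le ht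
  · simpa only [worsen_apply_of_notMem hi] using div_le_self (hy i).le ht

lemma div_le_ratio_of_mem {i : Fin p} (hi : i ∈ MIN) : y i / y' i ≤ ratio p MIN y' y :=
  (le_ciSup (f := fun j : MIN => y j / y' j) (Set.finite_range _).bddAbove ⟨i, hi⟩).trans
    (le_max_left _ _)

lemma div_le_ratio_of_notMem {i : Fin p} (hi : i ∉ MIN) : y' i / y i ≤ ratio p MIN y' y :=
  (le_ciSup (f := fun j : ↥MINᶜ => y' j / y j) (Set.finite_range _).bddAbove ⟨i, hi⟩).trans
    (le_max_right _ _)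

lemma leqPi_worsen_of_ratio_le (hy : Pos p y) (hy' : Pos p y') (h : ratio p MIN y' y ≤ c) :
    leqPi p MIN y (worsen MIN c y') := by
  refine ⟨fun i hi => ?_, fun i hi => ?_⟩
  · rw [worsen_apply_of_mem hi, ← div_le_iff₀ (hy' i)]
    exact (div_le_ratio_of_mem hi).trans h
  · have hle : y' i / y i ≤ c := (div_le_ratio_of_notMem hi).trans h
    have hc : 0 < c := (div_pos (hy' i) (hy i)).trans_le hle
    rwa [worsen_apply_of_notMem hi, div_le_comm₀ hc (hy i)]

lemma ltPi_worsen_of_ratio_lt (hy : Pos p y) (hy' : Pos p y') (h : ratio p MIN y' y < c) :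
    ltPi p MIN y (worsen MIN c y') := by
  refine ⟨fun i hi => ?_, fun i hi => ?_⟩
  · rw [worsen_apply_of_mem hi, ← div_lt_iff₀ (hy' i)]
    exact (div_le_ratio_of_mem hi).trans_lt h
  · have hlt : y' i / y i < c := (div_le_ratio_of_notMem hi).trans_lt h
    have hc : 0 < c := (div_pos (hy' i) (hy i)).trans hlt
    rwa [worsen_apply_of_notMem hi, div_lt_comm₀ hc (hy i)]

lemma approximates_iff_leqPi_worsen {X : Type*} {f : X → Fin p → ℝ} {x x' : X} :
    Approximates p MIN c f x x' ↔ leqPi p MIN (f x) (worsen MIN c (f x')) := by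
  refine and_congr (forall₂_congr fun i hi => ?_) (forall₂_congr fun i hi => ?_)
  · rw [worsen_apply_of_mem hi]
  · rw [worsen_apply_of_notMem hi, one_div_mul_eq_div]

end Worsen

section Scalarization

variable {p : ℕ} {MIN : Set (Fin p)} {s : (Fin p → ℝ) → ℝ} {S : Set ((Fin p → ℝ) → ℝ)}
  {y y' z : Fin p → ℝ} {c : ℝ}

lemma Scalarizing.exists_mem_levelSet_leqPi (hs : Scalarizing p MIN s) (hy : Pos p y)
    (hy' : Pos p y') (hle : s y ≤ s y') : ∃ z ∈ LevelSet p s y', leqPi p MIN y z := by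
  have worsen_pos {t : ℝ} (ht : t ∈ Set.Ici 1) : Pos p (worsen MIN t y) :=
    hy.worsen (zero_lt_one.trans_le ht)
  have hcont : ContinuousOn (fun t => s (worsen MIN t y)) (Set.Ici 1) :=
    hs.1.comp (continuousOn_worsen.mono fun t ht => (zero_lt_one.trans_le ht).ne')
      fun t ht => worsen_pos ht
  obtain ⟨T, hT, hratio⟩ : ∃ T ∈ Set.Ici (1 : ℝ), ratio p MIN y y' < T :=
    ⟨max 1 (ratio p MIN y y' + 1), Set.mem_Ici.2 (le_max_left _ _),
      lt_max_of_lt_right (lt_add_one _)⟩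
  have hlt : s y' < s (worsen MIN T y) :=
    hs.2 _ _ hy' (worsen_pos hT) (ltPi_worsen_of_ratio_lt hy' hy hratio)
  obtain ⟨t, ht, hst⟩ : s y' ∈ (fun t => s (worsen MIN t y)) '' Set.Ici 1 :=
    isPreconnected_Ici.intermediate_value Set.self_mem_Ici hT hcont
      ⟨by simpa only [worsen_one] using hle, hlt.le⟩
  exact ⟨worsen MIN t y, ⟨worsen_pos ht, hst⟩, leqPi_worsen_self hy ht⟩

lemma ratio_le_of_supRatio_le (hz : z ∈ LevelSet p s y') (h : supRatio p MIN s y' ≤ c) :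
    ratio p MIN y' z ≤ c :=
  EReal.coe_le_coe_iff.1 ((le_sSup (Set.mem_image_of_mem _ hz)).trans h)

lemma Scalarizing.leqPi_worsen_of_supRatio_le (hs : Scalarizing p MIN s) (hy : Pos p y)
    (hy' : Pos p y') (hle : s y ≤ s y') (h : supRatio p MIN s y' ≤ c) :
    leqPi p MIN y (worsen MIN c y') := by
  obtain ⟨z, hz, hyz⟩ := hs.exists_mem_levelSet_leqPi hy hy' hle
  exact hyz.trans (leqPi_worsen_of_ratio_le hz.1 hy' (ratio_le_of_supRatio_le hz h))

lemma OptSolSet.approxSet {X : Type*} {f : X → Fin p → ℝ} {P : Set X} (hP : OptSolSet p S f P)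
    (hS : ∀ s ∈ S, Scalarizing p MIN s) (hf : ∀ x, Pos p (f x))
    (h : ∀ x', ∃ s ∈ S, supRatio p MIN s (f x') ≤ c) : ApproxSet p MIN c f P := fun x' => by
  obtain ⟨s, hs, hsup⟩ := h x'
  obtain ⟨x, hxP, hopt⟩ := hP s hs
  exact ⟨x, hxP, approximates_iff_leqPi_worsen.2 <|
    (hS s hs).leqPi_worsen_of_supRatio_le (hf x) (hf x') (hopt x') hsup⟩

/-- The approximation quality `α := sup_{y' ∈ ℝ^p_>} inf_{s ∈ S} sup R(y', s)` of a scalarization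
`S`, an extended real. -/
noncomputable def approxQuality (p : ℕ) (MIN : Set (Fin p)) (S : Set ((Fin p → ℝ) → ℝ)) : EReal :=
  ⨆ y' ∈ {y : Fin p → ℝ | Pos p y}, ⨅ s ∈ S, supRatio p MIN s y'

lemma iInf_supRatio_le_approxQuality (hy' : Pos p y') :
    ⨅ s ∈ S, supRatio p MIN s y' ≤ approxQuality p MIN S :=
  le_iSup₂ (f := fun y' (_ : y' ∈ {y | Pos p y}) => ⨅ s ∈ S, supRatio p MIN s y') y' hy'

end Scalarization

end MOApprox

open MOApprox in
theorem statement11_general {p : ℕ} {MIN : Set (Fin p)} {S : Set ((Fin p → ℝ) → ℝ)}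
    (hS : ∀ s ∈ S, Scalarizing p MIN s) (hfin : approxQuality p MIN S ≠ ⊤)
    {X : Type*} {f : X → Fin p → ℝ} (hf : ∀ x, Pos p (f x))
    {P : Set X} (hP : OptSolSet p S f P) :
    (∀ ε : ℝ, 0 < ε → ApproxSet p MIN ((approxQuality p MIN S).toReal + ε) f P) ∧
    ((∀ y', Pos p y' → ∃ s ∈ S, supRatio p MIN s y' = ⨅ s' ∈ S, supRatio p MIN s' y') →
      ApproxSet p MIN (approxQuality p MIN S).toReal f P) := by
  have hinf_le {y'} (hy' : Pos p y') :
      ⨅ s ∈ S, supRatio p MIN s y' ≤ (approxQuality p MIN S).toReal :=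
    (iInf_supRatio_le_approxQuality hy').trans (EReal.le_coe_toReal hfin)
  refine ⟨fun ε hε => hP.approxSet hS hf fun x' => ?_,
    fun hattained => hP.approxSet hS hf fun x' => ?_⟩
  · have hlt : ⨅ s ∈ S, supRatio p MIN s (f x') < ((approxQuality p MIN S).toReal + ε : ℝ) :=
      (hinf_le (hf x')).trans_lt (EReal.coe_lt_coe (lt_add_of_pos_right _ hε))
    simp only [iInf_lt_iff] at hlt
    obtain ⟨s, hs, hsup⟩ := hlt
    exact ⟨s, hs, hsup.le⟩
  · obtain ⟨s, hs, hsup⟩ := hattained (f x') (hf x')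
    exact ⟨s, hs, hsup.trans_le (hinf_le (hf x'))⟩

open MOApprox in
/-- Let `α := sup_{y' ∈ ℝ^p_>} inf_{s ∈ S} sup R(y', s)` in the
extended reals. If `α < ∞`, then for every `ε > 0`, in every instance of every
`p`-objective problem of type `Π`, every optimal solution set for `S` is an
`(α + ε)`-approximation set. If moreover for every positive `y'` the infimum
is attained at some `s ∈ S` and is finite, then every optimal solution set for
`S` is an `α`-approximation set. -/
theorem statement11 (p : ℕ) (hp : 1 ≤ p) (MIN : Set (Fin p))
    (S : Set ((Fin p → ℝ) → ℝ)) (hS : ∀ s ∈ S, Scalarizing p MIN s)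
    (hfin : (⨆ y' ∈ {y : Fin p → ℝ | Pos p y}, ⨅ s ∈ S, supRatio p MIN s y') ≠ ⊤) :
    (∀ ε : ℝ, 0 < ε → ∀ (X : Type) (f : X → Fin p → ℝ), Nonempty X →
        (∀ x, Pos p (f x)) → IsCompact (Set.range f) →
        ∀ P : Set X, OptSolSet p S f P →
          ApproxSet p MIN
            ((⨆ y' ∈ {y : Fin p → ℝ | Pos p y}, ⨅ s ∈ S, supRatio p MIN s y').toReal + ε)
            f P) ∧
    ((∀ y' : Fin p → ℝ, Pos p y' → ∃ s ∈ S,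
        supRatio p MIN s y' = (⨅ s' ∈ S, supRatio p MIN s' y') ∧
          supRatio p MIN s y' ≠ ⊤) →
      ∀ (X : Type) (f : X → Fin p → ℝ), Nonempty X →
        (∀ x, Pos p (f x)) → IsCompact (Set.range f) →
        ∀ P : Set X, OptSolSet p S f P →
          ApproxSet p MIN
            ((⨆ y' ∈ {y : Fin p → ℝ | Pos p y}, ⨅ s ∈ S, supRatio p MIN s y').toReal)
            f P) :=
  ⟨fun ε hε _ _ _ hf _ _ hP => (statement11_general hS hfin hf hP).1 ε hε,
    fun hattained _ _ _ hf _ _ hP => (statement11_general hS hfin hf hP).2 fun y' hy' =>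
      (hattained y' hy').imp fun _ h => ⟨h.1, h.2.1⟩⟩
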